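/- Let Γ be a terminal DG game and let (u,a) ∈ E be a move with a ∈ T such that a is the ≻_{i(u)}-best outcome in A = T ∪ {∞} (a #1-move). Let Γ' be the DG game obtained from Γ by deleting all moves leaving u other than (u,a). Then every terminal Nash equilibrium of Γ' is also a terminal Nash equilibrium of Γ. -/

import Mathlib

/-!
Deleting the moves `(u, y)` with `y ≠ a` does not change the set of terminals, so the play and
the outcome of any situation are the same in `Γ` and `Γ'`.  Only deviations `σ'` in `Γ` with
`σ' u ≠ a` are new, and since `σ u = a` they belong to the player `i(u)`.  Redirect such a `σ'`
at `u` to `a`; this gives a deviation `τ` available in `Γ'`.  If the play of `σ'` avoids `u`, then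
`τ` has the same outcome as `σ'` (`outcome_update_of_avoid`), so `σ'` is not improving.  If it
visits `u`, then `τ` has outcome `a` (`outcome_update_of_visit`); as `τ` is not improving, `σ`
already yields the best outcome `a` of player `i(u)`, and `σ'` is not improving either.
-/

open Classical

/-- A deterministic graphical (DG) game on vertex (position) set `V` with player set `ι`.
`adj` is the move relation of the digraph; terminals are exactly the vertices of
out-degree `0`.  `owner x` is the player controlling position `x` (irrelevant for
terminals), `init` is the initial position, and `pref i x y` means that player `i`
strictly prefers outcome `x` to outcome `y`, where outcomes are encoded as
`Option V`: `some t` for a terminal `t` and `none` for the infinite outcome `∞`. -/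
structure DGGame (V : Type*) (ι : Type*) where
  adj : V → V → Prop
  owner : V → ι
  init : V
  pref : ι → Option V → Option V → Prop

namespace DGGame

variable {V ι : Type*} (Γ : DGGame V ι)

/-- A terminal position: no outgoing moves. -/
def Terminal (x : V) : Prop := ∀ y, ¬ Γ.adj x y

/-- The set of outcomes `A = T ∪ {∞}`. -/
def OutcomeSet : Set (Option V) := {x | x = none ∨ ∃ t, Γ.Terminal t ∧ x = some t}

/-- The preferences of each player form a strict linear order on the outcome set. -/
def PrefOrder : Prop :=
  ∀ i : ι,
    (∀ x ∈ Γ.OutcomeSet, ¬ Γ.pref i x x) ∧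
    (∀ x ∈ Γ.OutcomeSet, ∀ y ∈ Γ.OutcomeSet, ∀ z ∈ Γ.OutcomeSet,
        Γ.pref i x y → Γ.pref i y z → Γ.pref i x z) ∧
    (∀ x ∈ Γ.OutcomeSet, ∀ y ∈ Γ.OutcomeSet, x ≠ y → Γ.pref i x y ∨ Γ.pref i y x)

/-- One step of the play determined by a situation `σ` (stays put at terminals). -/
noncomputable def step (σ : V → V) (x : V) : V :=
  if Γ.Terminal x then x else σ x

/-- The position reached after `n` moves of the play starting at the initial position. -/
noncomputable def iter (σ : V → V) (n : ℕ) : V := (Γ.step σ)^[n] Γ.init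

/-- The outcome `g(σ)` of a situation: the terminal at which the play from the initial
position ends, or `none` (i.e. `∞`) if the play is infinite. -/
noncomputable def outcome (σ : V → V) : Option V :=
  if h : ∃ n, Γ.Terminal (Γ.iter σ n) then some (Γ.iter σ (Nat.find h)) else none

/-- A situation: a choice, for every non-terminal position, of a move from it.
(Values at terminal positions are irrelevant.) -/
def IsSituation (σ : V → V) : Prop := ∀ x, ¬ Γ.Terminal x → Γ.adj x (σ x)

/-- Nash equilibrium in pure stationary strategies: no player `i` can obtain a strictly
better outcome by changing his own moves only. -/
def IsNE (σ : V → V) : Prop :=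
  Γ.IsSituation σ ∧
  ∀ (i : ι) (σ' : V → V), Γ.IsSituation σ' →
    (∀ x, Γ.owner x ≠ i → σ' x = σ x) →
    ¬ Γ.pref i (Γ.outcome σ') (Γ.outcome σ)

/-- A terminal Nash equilibrium: a NE whose outcome is a terminal. -/
def IsTerminalNE (σ : V → V) : Prop := Γ.IsNE σ ∧ ∃ t, Γ.outcome σ = some t

/-- A non-terminal Nash equilibrium: a NE whose outcome is `∞`. -/
def IsNonterminalNE (σ : V → V) : Prop := Γ.IsNE σ ∧ Γ.outcome σ = none

/-- A terminal DG game: every player prefers every terminal outcome to `∞`. -/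
def TerminalGame : Prop := ∀ (i : ι) (t : V), Γ.Terminal t → Γ.pref i (some t) none

/-- A play-once DG game: every player controls exactly one position. -/
def PlayOnce : Prop := ∀ i : ι, {x | ¬ Γ.Terminal x ∧ Γ.owner x = i}.ncard = 1

/-- Reachability by a directed path. -/
def Reaches (x y : V) : Prop := Relation.ReflTransGen Γ.adj x y

end DGGame

namespace DGGame

variable {V ι : Type*} (Γ : DGGame V ι)

theorem iter_succ (σ : V → V) (n : ℕ) : Γ.iter σ (n + 1) = Γ.step σ (Γ.iter σ n) :=
  Function.iterate_succ_apply' _ _ _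

theorem iter_add_of_terminal {σ : V → V} {n : ℕ} (h : Γ.Terminal (Γ.iter σ n)) (k : ℕ) :
    Γ.iter σ (n + k) = Γ.iter σ n := by
  induction k with
  | zero => rfl
  | succ k ih => rw [← add_assoc, iter_succ, ih, step, if_pos h]

theorem outcome_eq_of_terminal {σ : V → V} {n : ℕ} (h : Γ.Terminal (Γ.iter σ n)) :
    Γ.outcome σ = some (Γ.iter σ n) := by
  have hex : ∃ n, Γ.Terminal (Γ.iter σ n) := ⟨n, h⟩
  obtain ⟨k, hk⟩ := Nat.exists_eq_add_of_le (Nat.find_min' hex h)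
  rw [outcome, dif_pos hex]
  conv_rhs => rw [hk, Γ.iter_add_of_terminal (Nat.find_spec hex)]

theorem outcome_mem (σ : V → V) : Γ.outcome σ ∈ Γ.OutcomeSet := by
  by_cases hex : ∃ n, Γ.Terminal (Γ.iter σ n)
  · obtain ⟨n, hn⟩ := hex
    exact Or.inr ⟨_, hn, Γ.outcome_eq_of_terminal hn⟩
  · exact Or.inl (dif_neg hex)

theorem outcome_congr {Γ' : DGGame V ι} {σ τ : V → V}
    (ht : ∀ x, Γ'.Terminal x ↔ Γ.Terminal x) (h : ∀ n, Γ'.iter τ n = Γ.iter σ n) :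
    Γ'.outcome τ = Γ.outcome σ := by
  by_cases hex : ∃ n, Γ.Terminal (Γ.iter σ n)
  · obtain ⟨n, hn⟩ := hex
    have hn' : Γ'.Terminal (Γ'.iter τ n) := by rwa [ht, h]
    rw [Γ.outcome_eq_of_terminal hn, Γ'.outcome_eq_of_terminal hn', h]
  · have hex' : ¬ ∃ n, Γ'.Terminal (Γ'.iter τ n) := by simpa only [ht, h] using hex
    rw [outcome, outcome, dif_neg hex, dif_neg hex']

theorem iter_update_of_avoid {σ : V → V} {u a : V} {n : ℕ} (h : ∀ m < n, Γ.iter σ m ≠ u) :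
    Γ.iter (Function.update σ u a) n = Γ.iter σ n := by
  induction n with
  | zero => rfl
  | succ n ih =>
    rw [iter_succ, iter_succ, ih fun m hm => h m (by omega), step, step,
      Function.update_of_ne (h n (by omega))]

theorem outcome_update_of_avoid {σ : V → V} {u a : V} (h : ∀ n, Γ.iter σ n ≠ u) :
    Γ.outcome (Function.update σ u a) = Γ.outcome σ :=
  Γ.outcome_congr (fun _ => Iff.rfl) fun _ => Γ.iter_update_of_avoid fun m _ => h m

theorem outcome_update_of_visit {σ : V → V} {u a : V} (hu : ¬ Γ.Terminal u)
    (ha : Γ.Terminal a) (h : ∃ n, Γ.iter σ n = u) :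
    Γ.outcome (Function.update σ u a) = some a := by
  -- Up to the first visit of `u` the two plays coincide.
  have h1 : Γ.iter (Function.update σ u a) (Nat.find h) = u :=
    (Γ.iter_update_of_avoid fun m hm => Nat.find_min h hm).trans (Nat.find_spec h)
  have h2 : Γ.iter (Function.update σ u a) (Nat.find h + 1) = a := by
    rw [iter_succ, h1, step, if_neg hu, Function.update_self]
  rw [Γ.outcome_eq_of_terminal (n := Nat.find h + 1) (by rwa [h2]), h2]

end DGGame

/-- Let `Γ` be a terminal DG game and `(u,a) ∈ E` a move with `a` a terminal that is
the `≻_{i(u)}`-best outcome in `A = T ∪ {∞}` (a `#1`-move).  Let `Γ'` be obtained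
from `Γ` by deleting all moves leaving `u` other than `(u,a)`.  Then every terminal
Nash equilibrium of `Γ'` is also a terminal Nash equilibrium of `Γ`. -/
theorem stmt8 {V ι : Type*} [Finite V] (Γ : DGGame V ι)
    (hinit : ¬ Γ.Terminal Γ.init) (hpref : Γ.PrefOrder)
    (hterm : Γ.TerminalGame)
    (u a : V) (hmove : Γ.adj u a) (hat : Γ.Terminal a)
    (hbest : ∀ x ∈ Γ.OutcomeSet, x ≠ some a → Γ.pref (Γ.owner u) (some a) x)
    (Γ' : DGGame V ι)
    (hΓ' : Γ' = { Γ with adj := fun x y => Γ.adj x y ∧ (x = u → y = a) }) :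
    ∀ σ : V → V, Γ'.IsTerminalNE σ → Γ.IsTerminalNE σ := by
  have hu : ¬ Γ.Terminal u := fun h => h a hmove
  have hadj : ∀ x y, Γ'.adj x y ↔ Γ.adj x y ∧ (x = u → y = a) := by
    subst hΓ'; exact fun _ _ => Iff.rfl
  have howner : Γ'.owner = Γ.owner := by subst hΓ'; rfl
  have hinit' : Γ'.init = Γ.init := by subst hΓ'; rfl
  have hpref' : Γ'.pref = Γ.pref := by subst hΓ'; rfl
  clear hΓ'
  have ht : ∀ x, Γ'.Terminal x ↔ Γ.Terminal x := by
    intro x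
    refine ⟨fun h y hy => ?_, fun h y hy => h y ((hadj x y).1 hy).1⟩
    by_cases hx : x = u
    · subst hx
      exact h a ((hadj x a).2 ⟨hmove, fun _ => rfl⟩)
    · exact h y ((hadj x y).2 ⟨hy, fun h => absurd h hx⟩)
  have hstep : ∀ τ, Γ'.step τ = Γ.step τ := fun τ => by
    funext x
    simp only [DGGame.step, ht]
  have hout : ∀ τ, Γ'.outcome τ = Γ.outcome τ := fun τ =>
    Γ.outcome_congr ht fun n => by rw [DGGame.iter, DGGame.iter, hstep, hinit']
  rintro σ ⟨⟨hsit, hne⟩, t, hσt⟩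
  have hσu : σ u = a := ((hadj u (σ u)).1 (hsit u (by rwa [ht]))).2 rfl
  refine ⟨⟨fun x hx => ((hadj x (σ x)).1 (hsit x (by rwa [ht]))).1, ?_⟩, t, by rw [← hout, hσt]⟩
  intro i σ' hsit' hdev hbetter
  have hτne : ¬ Γ.pref i (Γ.outcome (Function.update σ' u a)) (Γ.outcome σ) := by
    have := hne i (Function.update σ' u a) ?_ ?_
    · rwa [hpref', hout, hout] at this
    · intro x hx
      rw [ht] at hx
      by_cases hxu : x = u
      · subst hxu
        rw [Function.update_self]
        exact (hadj _ _).2 ⟨hmove, fun _ => rfl⟩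
      · rw [Function.update_of_ne hxu]
        exact (hadj _ _).2 ⟨hsit' x hx, fun h => absurd h hxu⟩
    · intro x hx
      rw [howner] at hx
      by_cases hxu : x = u
      · subst hxu
        rw [Function.update_self, hσu]
      · rw [Function.update_of_ne hxu, hdev x hx]
  by_cases hvis : ∃ n, Γ.iter σ' n = u
  · rw [Γ.outcome_update_of_visit hu hat hvis] at hτne
    by_cases hi : Γ.owner u = i
    · subst hi
      have hσ : Γ.outcome σ = some a := by
        by_contra h
        exact hτne (hbest _ (Γ.outcome_mem σ) h)
      obtain ⟨hirr, htrans, -⟩ := hpref (Γ.owner u)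
      have ha : some a ∈ Γ.OutcomeSet := Or.inr ⟨a, hat, rfl⟩
      rw [hσ] at hbetter
      by_cases h : Γ.outcome σ' = some a
      · rw [h] at hbetter
        exact hirr _ ha hbetter
      · exact hirr _ ha
          (htrans _ ha _ (Γ.outcome_mem σ') _ ha (hbest _ (Γ.outcome_mem σ') h) hbetter)
    · -- Player `i` does not control `u`, so `σ'` itself moves from `u` to `a`.
      have h : Function.update σ' u a = σ' := by
        rw [Function.update_eq_self_iff, hdev u hi, hσu]
      rw [← Γ.outcome_update_of_visit hu hat hvis, h] at hτne
      exact hτne hbetter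
  · rw [Γ.outcome_update_of_avoid (not_exists.1 hvis)] at hτne
    exact hτne hbetter
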